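/- Let v : ℝ → ℝ be a smooth function, and define the differential operators P and Q acting on smooth functions f : ℝ → ℝ by (P f)(t) = 4 f'''(t) + 3 v(t) f'(t) + (3/2) v'(t) f(t) and (Q f)(t) = 2 f''(t) + v(t) f(t). Then for every smooth f, (P(Q f) − Q(P f))(t) = (v'''(t) + 3 v(t) v'(t)) · f(t); i.e. the commutator [P, Q] is the operator of multiplication by v''' + 3 v v'. In particular, the string equation [P, Q] = g_s (a constant) holds if and only if v''' + 3 v v' is the constant function g_s. -/

import Mathlib

/-- The Lax operator `P = 4∂³ + 3v∂ + (3/2)v'` of the `(3,2)` model. -/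
noncomputable def laxP (v f : ℝ → ℝ) : ℝ → ℝ := fun t =>
  4 * iteratedDeriv 3 f t + 3 * v t * deriv f t + (3 / 2) * deriv v t * f t

/-- The Lax operator `Q = 2∂² + v` of the `(3,2)` model. -/
noncomputable def laxQ (v f : ℝ → ℝ) : ℝ → ℝ := fun t =>
  2 * iteratedDeriv 2 f t + v t * f t

/-!
For arbitrary coefficients `u`, `w`, `v`, the Leibniz rule gives
`[4∂³ + u∂ + w, 2∂² + v] = 4(3v' - u')∂² + 2(6v'' - u'' - 2w')∂ + (4v''' + uv' - 2w'')`: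
all terms of order at least three cancel. The constraints `u = 3v` and `w = (3/2)v'` are what makes
the coefficients of `∂²` and `∂` vanish, and what remains is multiplication by `v''' + 3vv'`.
Testing on the constant function `1` recovers this function from the operator.
-/

section IteratedDeriv

variable {𝕜 : Type*} [NontriviallyNormedField 𝕜] {F : Type*} [NormedAddCommGroup F]
  [NormedSpace 𝕜 F]

theorem iteratedDeriv_iteratedDeriv (m n : ℕ) (f : 𝕜 → F) :
    iteratedDeriv m (iteratedDeriv n f) = iteratedDeriv (m + n) f := by
  simp only [iteratedDeriv_eq_iterate, Function.iterate_add_apply]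

theorem contDiffAt_iteratedDeriv {m n : WithTop ℕ∞} {k : ℕ} {f : 𝕜 → F} {x : 𝕜}
    (hf : ContDiffAt 𝕜 n f x) (hmn : m + k ≤ n) : ContDiffAt 𝕜 m (iteratedDeriv k f) x := by
  induction k generalizing m with
  | zero => simpa only [iteratedDeriv_zero] using hf.of_le (by simpa using hmn)
  | succ k ih =>
    rw [iteratedDeriv_succ]
    refine (ih (m := m + 1) ?_).derivWithin le_rfl
    rwa [add_assoc, add_comm 1, ← Nat.cast_succ]

theorem iteratedDeriv_mul_iteratedDeriv {n k : ℕ} {a f : 𝕜 → 𝕜} {x : 𝕜}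
    (ha : ContDiffAt 𝕜 n a x) (hf : ContDiffAt 𝕜 (n + k : ℕ) f x) :
    iteratedDeriv n (fun y => a y * iteratedDeriv k f y) x =
      ∑ i ∈ Finset.range (n + 1),
        n.choose i * iteratedDeriv i a x * iteratedDeriv (n - i + k) f x := by
  rw [iteratedDeriv_fun_mul ha (contDiffAt_iteratedDeriv hf (by simp))]
  simp only [iteratedDeriv_iteratedDeriv]

end IteratedDeriv

/-- The operator `4∂³ + u∂ + w`, with coefficients not yet subject to the constraints `u = 3v` and
`w = (3/2)v'` that give `laxP v`. -/
noncomputable def unconstrainedLaxP (u w f : ℝ → ℝ) : ℝ → ℝ := fun t =>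
  4 * iteratedDeriv 3 f t + u t * deriv f t + w t * f t

theorem laxP_eq_unconstrainedLaxP (v : ℝ → ℝ) :
    laxP v = unconstrainedLaxP (fun t => 3 * v t) (fun t => 3 / 2 * deriv v t) :=
  rfl

section Commutator

variable {u v w f : ℝ → ℝ} {t : ℝ}

theorem iteratedDeriv_laxQ {n : ℕ} (hv : ContDiffAt ℝ n v t) (hf : ContDiffAt ℝ (n + 2 : ℕ) f t) :
    iteratedDeriv n (laxQ v f) t = 2 * iteratedDeriv (n + 2) f t +
      ∑ i ∈ Finset.range (n + 1), n.choose i * iteratedDeriv i v t * iteratedDeriv (n - i) f t := by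
  have hf₀ : ContDiffAt ℝ n f t := hf.of_le (by norm_cast; lia)
  have hf₂ : ContDiffAt ℝ n (iteratedDeriv 2 f) t := contDiffAt_iteratedDeriv hf (by simp)
  unfold laxQ
  rw [iteratedDeriv_fun_add (contDiffAt_const.mul hf₂) (hv.mul hf₀), iteratedDeriv_fun_mul hv hf₀,
    iteratedDeriv_const_mul_field, iteratedDeriv_iteratedDeriv]

theorem iteratedDeriv_unconstrainedLaxP {n : ℕ} (hu : ContDiffAt ℝ n u t)
    (hw : ContDiffAt ℝ n w t) (hf : ContDiffAt ℝ (n + 3 : ℕ) f t) :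
    iteratedDeriv n (unconstrainedLaxP u w f) t = 4 * iteratedDeriv (n + 3) f t +
      ∑ i ∈ Finset.range (n + 1),
        n.choose i * iteratedDeriv i u t * iteratedDeriv (n - i + 1) f t +
      ∑ i ∈ Finset.range (n + 1),
        n.choose i * iteratedDeriv i w t * iteratedDeriv (n - i) f t := by
  have hf₀ : ContDiffAt ℝ n f t := hf.of_le (by norm_cast; lia)
  have hf₁ : ContDiffAt ℝ (n + 1 : ℕ) f t := hf.of_le (by norm_cast; lia)
  have hdf : ContDiffAt ℝ n (iteratedDeriv 1 f) t := contDiffAt_iteratedDeriv hf₁ (by simp)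
  have hf₃ : ContDiffAt ℝ n (iteratedDeriv 3 f) t := contDiffAt_iteratedDeriv hf (by simp)
  have h4f₃ : ContDiffAt ℝ n (fun s => 4 * iteratedDeriv 3 f s) t := contDiffAt_const.mul hf₃
  unfold unconstrainedLaxP
  simp only [← iteratedDeriv_one (f := f)]
  rw [iteratedDeriv_fun_add (h4f₃.add (hu.mul hdf)) (hw.mul hf₀),
    iteratedDeriv_fun_add h4f₃ (hu.mul hdf), iteratedDeriv_mul_iteratedDeriv hu hf₁,
    iteratedDeriv_fun_mul hw hf₀, iteratedDeriv_const_mul_field, iteratedDeriv_iteratedDeriv]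

theorem unconstrainedLaxP_laxQ_sub_laxQ_unconstrainedLaxP (hu : ContDiffAt ℝ 2 u t)
    (hv : ContDiffAt ℝ 3 v t) (hw : ContDiffAt ℝ 2 w t) (hf : ContDiffAt ℝ 5 f t) :
    unconstrainedLaxP u w (laxQ v f) t - laxQ v (unconstrainedLaxP u w f) t =
      4 * (3 * deriv v t - deriv u t) * iteratedDeriv 2 f t +
      2 * (6 * iteratedDeriv 2 v t - iteratedDeriv 2 u t - 2 * deriv w t) * deriv f t +
      (4 * iteratedDeriv 3 v t + u t * deriv v t - 2 * iteratedDeriv 2 w t) * f t := by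
  have hQ₁ := iteratedDeriv_laxQ (n := 1) (hv.of_le (by norm_num)) (hf.of_le (by norm_num))
  have hQ₃ := iteratedDeriv_laxQ (n := 3) hv hf
  have hP₂ := iteratedDeriv_unconstrainedLaxP (n := 2) hu hw hf
  change 4 * iteratedDeriv 3 (laxQ v f) t + u t * deriv (laxQ v f) t + w t * laxQ v f t -
    (2 * iteratedDeriv 2 (unconstrainedLaxP u w f) t + v t * unconstrainedLaxP u w f t) = _
  rw [← iteratedDeriv_one (f := laxQ v f), hQ₁, hQ₃, hP₂]
  simp only [Nat.reduceAdd, Nat.reduceSub, Nat.add_one_sub_one, Nat.cast_one, Nat.cast_ofNat,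
    Nat.choose, Finset.sum_range_succ, Finset.range_one, Finset.sum_singleton, tsub_zero, tsub_self,
    zero_add, add_zero, one_mul, iteratedDeriv_zero, iteratedDeriv_one, laxQ, unconstrainedLaxP]
  ring

theorem laxP_laxQ_sub_laxQ_laxP (hv : ContDiffAt ℝ 3 v t) (hf : ContDiffAt ℝ 5 f t) :
    laxP v (laxQ v f) t - laxQ v (laxP v f) t =
      (iteratedDeriv 3 v t + 3 * v t * deriv v t) * f t := by
  have hu : ContDiffAt ℝ 2 (fun s => 3 * v s) t :=
    contDiffAt_const.mul (hv.of_le (by norm_num))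
  have hw : ContDiffAt ℝ 2 (fun s => 3 / 2 * deriv v s) t :=
    contDiffAt_const.mul (hv.derivWithin (by norm_num))
  have deriv_w : deriv (fun s => 3 / 2 * deriv v s) t = 3 / 2 * iteratedDeriv 2 v t := by
    rw [deriv_const_mul_field, iteratedDeriv_succ, iteratedDeriv_one]
  have deriv2_w : iteratedDeriv 2 (fun s => 3 / 2 * deriv v s) t = 3 / 2 * iteratedDeriv 3 v t := by
    rw [iteratedDeriv_const_mul_field, ← iteratedDeriv_succ']
  rw [laxP_eq_unconstrainedLaxP, unconstrainedLaxP_laxQ_sub_laxQ_unconstrainedLaxP hu hv hw hf,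
    deriv_w, deriv2_w, deriv_const_mul_field, iteratedDeriv_const_mul_field]
  ring

end Commutator

theorem lax_pair_commutator_general {n : WithTop ℕ∞} (hn : 5 ≤ n) (v : ℝ → ℝ)
    (hv : ContDiff ℝ 3 v) :
    (∀ f : ℝ → ℝ, ContDiff ℝ n f → ∀ t : ℝ,
        laxP v (laxQ v f) t - laxQ v (laxP v f) t =
          (iteratedDeriv 3 v t + 3 * v t * deriv v t) * f t) ∧
    (∀ gs : ℝ,
      (∀ f : ℝ → ℝ, ContDiff ℝ n f → ∀ t : ℝ,
          laxP v (laxQ v f) t - laxQ v (laxP v f) t = gs * f t) ↔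
        (∀ t : ℝ, iteratedDeriv 3 v t + 3 * v t * deriv v t = gs)) := by
  have commutator (f : ℝ → ℝ) (hf : ContDiff ℝ n f) (t : ℝ) :=
    laxP_laxQ_sub_laxQ_laxP hv.contDiffAt (hf.of_le hn).contDiffAt (t := t)
  refine ⟨commutator, fun gs => ⟨fun string_eq t => ?_, fun hgs f hf t => ?_⟩⟩
  · simpa using (commutator _ contDiff_const t).symm.trans (string_eq (fun _ => 1) contDiff_const t)
  · rw [commutator f hf, hgs]

/-- For smooth `v`, the commutator `[P, Q]` of the Lax pair `P = 4∂³ + 3v∂ + (3/2)v'`,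
`Q = 2∂² + v` is multiplication by `v''' + 3vv'`; in particular the string equation
`[P,Q] = g_s` holds iff `v''' + 3vv'` is the constant `g_s`. -/
theorem lax_pair_commutator (v : ℝ → ℝ) (hv : ContDiff ℝ (⊤ : ℕ∞) v) :
    (∀ f : ℝ → ℝ, ContDiff ℝ (⊤ : ℕ∞) f → ∀ t : ℝ,
        laxP v (laxQ v f) t - laxQ v (laxP v f) t =
          (iteratedDeriv 3 v t + 3 * v t * deriv v t) * f t) ∧
    (∀ gs : ℝ,
      (∀ f : ℝ → ℝ, ContDiff ℝ (⊤ : ℕ∞) f → ∀ t : ℝ,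
          laxP v (laxQ v f) t - laxQ v (laxP v f) t = gs * f t) ↔
        (∀ t : ℝ, iteratedDeriv 3 v t + 3 * v t * deriv v t = gs)) := by
  exact lax_pair_commutator_general (WithTop.coe_le_coe.2 le_top) v (contDiff_infty.1 hv 3)
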